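/- Let p ≥ 6, u = 2^(1−p), and let o_x, o_y ∈ [1, 1/(8u) − 2]. Let x_h, x_l, y_h, y_l ∈ F_p satisfy |x_l| ≤ o_x·u·|x_h| and |y_l| ≤ o_y·u·|y_h|. Then in any execution of sloppy double-word addition in faithful rounding, the concluding Fast2Sum (normalization) step is valid: |z_h + z_l − (s_h + w)| ≤ u²·|s_h + w|. -/

import Mathlib

/-!
The computation `z_l = ∘(w - d)` commits a relative error at most `u` on `w - d`, and `z_h`
commits a relative error at most `u` on `s_h + w`.  Hence as soon as `d = z_h - s_h` is computed
exactly, `w - d = (s_h + w) - z_h` and the total error is at most `u² |s_h + w|`.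

The subtraction `z_h - s_h` is exact whenever `s_h` is an integer multiple of a unit `2^e` in
which `w = M * 2^e` with `|M| ≤ 2^p - 1` (`fast2Sum_exact`).  Indeed if `s_h + w` is not
representable, then for some `k ≥ 1` the number `z_h` is a multiple of `2^(e+k)` and `s_h` is a
multiple of `2^(e+k-1)`; their difference is then at most `2^p` units `2^(e+k-1)`.

Such a common unit exists in both regimes.  Let `m = max |x_h| |y_h|`.
* If `|x_h + y_h| ≥ m / 2`, then `|s_h| ≥ m / 2`, while crude error bounds on `2Sum` give
  `|w| ≤ m / 2`.
* If `|x_h + y_h| < m / 2`, then massive cancellation makes `x_h + y_h` representable, so that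
  `s_l = 0`, `w = v`, and `|v| ≤ m / 2 ≤ min |x_h| |y_h|`, while `s_h` is a multiple of the unit of
  the smaller of `x_h`, `y_h`.
-/

/-- The radix-2, precision-`p` floating-point numbers with unlimited exponent range. -/
def Fp (p : ℕ) : Set ℝ := {x : ℝ | ∃ M e : ℤ, |M| ≤ 2 ^ p - 1 ∧ x = (M : ℝ) * (2 : ℝ) ^ e}

/-- Round toward `-∞`: the largest floating-point number `≤ x`. -/
noncomputable def RD (p : ℕ) (x : ℝ) : ℝ := sSup {f : ℝ | f ∈ Fp p ∧ f ≤ x}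

/-- Round toward `+∞`: the smallest floating-point number `≥ x`. -/
noncomputable def RU (p : ℕ) (x : ℝ) : ℝ := sInf {f : ℝ | f ∈ Fp p ∧ x ≤ f}

/-- `y` is a faithful rounding of `x`. -/
def Faithful (p : ℕ) (x y : ℝ) : Prop := y = RD p x ∨ y = RU p x

/-- All hypotheses of one execution of the sloppy double-word addition algorithm
(`2Sum(x_h,y_h)`, `v = ∘(x_l+y_l)`, `w = ∘(s_l+v)`, `Fast2Sum(s_h,w)`) in faithful
rounding, each rounding chosen independently. -/
def SloppyFaithful (p : ℕ) (xh xl yh yl sh a' b' da db sl v w zh d zl : ℝ) : Prop :=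
  Faithful p (xh + yh) sh ∧ Faithful p (sh - yh) a' ∧ Faithful p (sh - a') b' ∧
  Faithful p (xh - a') da ∧ Faithful p (yh - b') db ∧ Faithful p (da + db) sl ∧
  Faithful p (xl + yl) v ∧ Faithful p (sl + v) w ∧
  Faithful p (sh + w) zh ∧ Faithful p (zh - sh) d ∧ Faithful p (w - d) zl

/-! ### The set of floating-point numbers -/

theorem Fp_neg {p : ℕ} {x : ℝ} (h : x ∈ Fp p) : -x ∈ Fp p := by
  obtain ⟨M, e, hM, rfl⟩ := h
  exact ⟨-M, e, by rwa [abs_neg], by push_cast; ring⟩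

theorem Fp_zero (p : ℕ) : (0 : ℝ) ∈ Fp p :=
  ⟨0, 0, by simpa using one_le_pow₀ (by norm_num : (1 : ℤ) ≤ 2), by simp⟩

theorem Fp_abs {p : ℕ} {x : ℝ} (h : x ∈ Fp p) : |x| ∈ Fp p := by
  rcases abs_choice x with h' | h' <;> rw [h']
  · exact h
  · exact Fp_neg h

theorem Fp_half {p : ℕ} {x : ℝ} (h : x ∈ Fp p) : x / 2 ∈ Fp p := by
  obtain ⟨M, e, hM, rfl⟩ := h
  refine ⟨M, e - 1, hM, ?_⟩
  rw [zpow_sub_one₀ (by norm_num)]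
  ring

/-- The significand `±2^p` is allowed as well, since `2^p * 2^q = 2^(p-1) * 2^(q+1)`. -/
theorem Fp_of_abs_le {p : ℕ} (hp : 1 ≤ p) {J q : ℤ} (hJ : |J| ≤ 2 ^ p) :
    (J : ℝ) * 2 ^ q ∈ Fp p := by
  rcases lt_or_eq_of_le hJ with h | h
  · exact ⟨J, q, by lia, rfl⟩
  · have key : (2 : ℝ) ^ p * 2 ^ q ∈ Fp p := by
      obtain ⟨r, rfl⟩ := Nat.exists_eq_add_of_le hp
      refine ⟨2 ^ r, q + 1, ?_, ?_⟩
      · have : (1 : ℤ) ≤ 2 ^ r := one_le_pow₀ (by norm_num)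
        rw [abs_of_nonneg (by positivity), pow_add]
        lia
      · rw [zpow_add_one₀ (by norm_num)]
        push_cast
        ring
    rcases abs_choice J with h' | h' <;> rw [h'] at h
    · rw [h]; exact_mod_cast key
    · have : J = -2 ^ p := by lia
      rw [this]
      have := Fp_neg key
      push_cast
      rwa [← neg_mul] at this

/-- A nonzero real lies in a binade, on which consecutive floats are `2^q` apart. -/
theorem exists_binade {p : ℕ} (hp : 1 ≤ p) {x : ℝ} (hx : x ≠ 0) :
    ∃ q : ℤ, (2 : ℝ) ^ (p - 1) * 2 ^ q ≤ |x| ∧ |x| < 2 ^ p * 2 ^ q := by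
  obtain ⟨n, h1, h2⟩ := exists_mem_Ico_zpow (abs_pos.mpr hx) (by norm_num : (1 : ℝ) < 2)
  obtain ⟨r, rfl⟩ := Nat.exists_eq_add_of_le hp
  refine ⟨n - r, ?_, ?_⟩
  · have h : (((1 + r - 1 : ℕ) : ℤ) + (n - r)) = n := by lia
    rw [← zpow_natCast, ← zpow_add₀ (by norm_num), h]
    exact h1
  · have h : (((1 + r : ℕ) : ℤ) + (n - r)) = n + 1 := by lia
    rw [← zpow_natCast, ← zpow_add₀ (by norm_num), h]
    exact h2

/-- A float whose absolute value is at least `2^(p-1) * 2^q` is a multiple of `2^q`. -/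
theorem Fp_multiple {p : ℕ} (hp : 1 ≤ p) {f : ℝ} (hf : f ∈ Fp p) {q : ℤ}
    (h : (2 : ℝ) ^ (p - 1) * 2 ^ q ≤ |f|) : ∃ n : ℤ, f = n * 2 ^ q := by
  obtain ⟨M, e, hM, rfl⟩ := hf
  rcases le_or_gt q e with hqe | hqe
  · obtain ⟨j, rfl⟩ := Int.le.dest hqe
    refine ⟨M * 2 ^ j, ?_⟩
    rw [zpow_add₀ (by norm_num)]
    push_cast
    rw [zpow_natCast]
    ring
  · exfalso
    have hMr : |(M : ℝ)| ≤ 2 ^ p - 1 := by exact_mod_cast hM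
    have he : (2 : ℝ) ^ (e + 1) ≤ 2 ^ q := zpow_le_zpow_right₀ (by norm_num) (by lia)
    rw [zpow_add_one₀ (by norm_num)] at he
    have hpos : (0 : ℝ) < 2 ^ e := by positivity
    rw [abs_mul, abs_of_pos hpos] at h
    obtain ⟨r, rfl⟩ := Nat.exists_eq_add_of_le hp
    simp only [Nat.add_sub_cancel_left, pow_add, pow_one] at *
    have h1 : (2 : ℝ) ^ r * (2 ^ e * 2) ≤ 2 ^ r * 2 ^ q := by gcongr
    have h2 : |(M : ℝ)| * 2 ^ e ≤ (2 * 2 ^ r - 1) * 2 ^ e := by gcongr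
    nlinarith

/-- On a binade, rounding down is the integer floor in units of `2^q`. -/
theorem isGreatest_floor {p : ℕ} (hp : 1 ≤ p) {x : ℝ} {q : ℤ}
    (h1 : (2 : ℝ) ^ (p - 1) * 2 ^ q ≤ |x|) (h2 : |x| < 2 ^ p * 2 ^ q) :
    IsGreatest {f : ℝ | f ∈ Fp p ∧ f ≤ x} (⌊x / 2 ^ q⌋ * 2 ^ q) := by
  have hpos : (0 : ℝ) < 2 ^ q := by positivity
  obtain ⟨h3, h4⟩ := abs_lt.mp h2
  refine ⟨⟨Fp_of_abs_le hp (abs_le.mpr ⟨?_, ?_⟩), ?_⟩, ?_⟩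
  · refine Int.le_floor.mpr ?_
    rw [le_div_iff₀ hpos]
    push_cast
    linarith
  · refine Int.le_of_lt (Int.floor_lt.mpr ?_)
    rw [div_lt_iff₀ hpos]
    push_cast
    linarith
  · exact (le_div_iff₀ hpos).mp (Int.floor_le _)
  · rintro f ⟨hf, hfx⟩
    by_cases hbig : (2 : ℝ) ^ (p - 1) * 2 ^ q ≤ |f|
    · obtain ⟨n, rfl⟩ := Fp_multiple hp hf hbig
      gcongr
      exact Int.le_floor.mpr ((le_div_iff₀ hpos).mpr hfx)
    · -- A float below the binade in absolute value is below `x` only for `x > 0`.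
      obtain ⟨h5, h6⟩ := abs_lt.mp (not_le.mp hbig)
      have hx : (2 : ℝ) ^ (p - 1) * 2 ^ q ≤ x := by
        rcases le_abs.mp h1 with h | h
        · exact h
        · linarith
      have : (2 ^ (p - 1) : ℤ) ≤ ⌊x / 2 ^ q⌋ := by
        refine Int.le_floor.mpr ?_
        rw [le_div_iff₀ hpos]
        push_cast
        exact hx
      have : (2 ^ (p - 1) : ℝ) ≤ ⌊x / 2 ^ q⌋ := by exact_mod_cast this
      nlinarith

theorem isLeast_ceil {p : ℕ} (hp : 1 ≤ p) {x : ℝ} {q : ℤ}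
    (h1 : (2 : ℝ) ^ (p - 1) * 2 ^ q ≤ |x|) (h2 : |x| < 2 ^ p * 2 ^ q) :
    IsLeast {f : ℝ | f ∈ Fp p ∧ x ≤ f} (⌈x / 2 ^ q⌉ * 2 ^ q) := by
  have h := isGreatest_floor hp (x := -x) (q := q) (by rwa [abs_neg]) (by rwa [abs_neg])
  have hc : (⌊-x / 2 ^ q⌋ : ℝ) * 2 ^ q = -(⌈x / 2 ^ q⌉ * 2 ^ q) := by
    rw [neg_div, Int.floor_neg]
    push_cast
    ring
  rw [hc] at h
  obtain ⟨⟨hm, hle⟩, hub⟩ := h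
  refine ⟨⟨by simpa using Fp_neg hm, by linarith⟩, ?_⟩
  rintro f ⟨hf, hfx⟩
  have := hub ⟨Fp_neg hf, neg_le_neg hfx⟩
  linarith

/-! ### Faithful rounding -/

theorem RD_isGreatest {p : ℕ} (hp : 1 ≤ p) (x : ℝ) :
    IsGreatest {f : ℝ | f ∈ Fp p ∧ f ≤ x} (RD p x) := by
  have : ∃ y, IsGreatest {f : ℝ | f ∈ Fp p ∧ f ≤ x} y := by
    by_cases hx : x = 0
    · exact ⟨0, ⟨Fp_zero p, hx.ge⟩, fun f hf => hx ▸ hf.2⟩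
    · obtain ⟨q, h1, h2⟩ := exists_binade hp hx
      exact ⟨_, isGreatest_floor hp h1 h2⟩
  obtain ⟨y, hy⟩ := this
  rw [RD, hy.csSup_eq]
  exact hy

theorem RU_isLeast {p : ℕ} (hp : 1 ≤ p) (x : ℝ) :
    IsLeast {f : ℝ | f ∈ Fp p ∧ x ≤ f} (RU p x) := by
  have : ∃ y, IsLeast {f : ℝ | f ∈ Fp p ∧ x ≤ f} y := by
    by_cases hx : x = 0
    · exact ⟨0, ⟨Fp_zero p, hx.le⟩, fun f hf => hx ▸ hf.2⟩
    · obtain ⟨q, h1, h2⟩ := exists_binade hp hx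
      exact ⟨_, isLeast_ceil hp h1 h2⟩
  obtain ⟨y, hy⟩ := this
  rw [RU, hy.csInf_eq]
  exact hy

theorem Faithful.mem {p : ℕ} (hp : 1 ≤ p) {x y : ℝ} (h : Faithful p x y) : y ∈ Fp p := by
  rcases h with rfl | rfl
  · exact (RD_isGreatest hp x).1.1
  · exact (RU_isLeast hp x).1.1

theorem Faithful.le_of_le {p : ℕ} (hp : 1 ≤ p) {x y g : ℝ} (h : Faithful p x y)
    (hg : g ∈ Fp p) (hgx : g ≤ x) : g ≤ y := by
  rcases h with rfl | rfl
  · exact (RD_isGreatest hp x).2 ⟨hg, hgx⟩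
  · exact hgx.trans (RU_isLeast hp x).1.2

theorem Faithful.ge_of_ge {p : ℕ} (hp : 1 ≤ p) {x y g : ℝ} (h : Faithful p x y)
    (hg : g ∈ Fp p) (hgx : x ≤ g) : y ≤ g := by
  rcases h with rfl | rfl
  · exact (RD_isGreatest hp x).1.2.trans hgx
  · exact (RU_isLeast hp x).2 ⟨hg, hgx⟩

theorem Faithful.eq_of_mem {p : ℕ} (hp : 1 ≤ p) {x y : ℝ} (h : Faithful p x y)
    (hx : x ∈ Fp p) : y = x :=
  le_antisymm (h.ge_of_ge hp hx le_rfl) (h.le_of_le hp hx le_rfl)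

theorem Faithful.binade {p : ℕ} (hp : 1 ≤ p) {x y : ℝ} (h : Faithful p x y) {q : ℤ}
    (h1 : (2 : ℝ) ^ (p - 1) * 2 ^ q ≤ |x|) (h2 : |x| < 2 ^ p * 2 ^ q) :
    (∃ n : ℤ, y = n * 2 ^ q) ∧ |y - x| < 2 ^ q := by
  have hpos : (0 : ℝ) < 2 ^ q := by positivity
  have hx : x = x / 2 ^ q * 2 ^ q := by field_simp
  rcases h with rfl | rfl
  · rw [(RD_isGreatest hp x).unique (isGreatest_floor hp h1 h2)]
    refine ⟨⟨_, rfl⟩, ?_⟩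
    have := Int.floor_le (x / 2 ^ q)
    have := Int.lt_floor_add_one (x / 2 ^ q)
    rw [abs_lt]
    constructor <;> nlinarith
  · rw [(RU_isLeast hp x).unique (isLeast_ceil hp h1 h2)]
    refine ⟨⟨_, rfl⟩, ?_⟩
    have := Int.le_ceil (x / 2 ^ q)
    have := Int.ceil_lt_add_one (x / 2 ^ q)
    rw [abs_lt]
    constructor <;> nlinarith

theorem Faithful.rel_error {p : ℕ} (hp : 1 ≤ p) {x y u : ℝ}
    (hu : u = (2 : ℝ) ^ (1 - (p : ℤ))) (h : Faithful p x y) : |y - x| ≤ u * |x| := by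
  by_cases hx : x = 0
  · rw [h.eq_of_mem hp (hx ▸ Fp_zero p), hx]
    simp
  · obtain ⟨q, h1, h2⟩ := exists_binade hp hx
    have hup : u * 2 ^ (p - 1) = 1 := by
      rw [hu, ← zpow_natCast, ← zpow_add₀ (by norm_num)]
      have : (1 : ℤ) - p + ((p - 1 : ℕ) : ℤ) = 0 := by lia
      rw [this, zpow_zero]
    have hu0 : 0 ≤ u := by rw [hu]; positivity
    calc |y - x| ≤ 2 ^ q := (h.binade hp h1 h2).2.le
      _ = u * (2 ^ (p - 1) * 2 ^ q) := by rw [← mul_assoc, hup, one_mul]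
      _ ≤ u * |x| := by gcongr

/-- A rounding of a number within `B` of `c` is within `B + u * (C + B)` of `c` if `|c| ≤ C`. -/
theorem Faithful.near {p : ℕ} (hp : 1 ≤ p) {x y u c B C : ℝ}
    (hu : u = (2 : ℝ) ^ (1 - (p : ℤ))) (h : Faithful p x y) (hB : |x - c| ≤ B) (hC : |c| ≤ C) :
    |y - c| ≤ B + u * (C + B) := by
  have h1 := h.rel_error hp hu
  have hu0 : 0 ≤ u := by rw [hu]; positivity
  have h2 : |x| ≤ C + B := by
    have := abs_add_le c (x - c)
    rw [add_sub_cancel] at this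
    linarith
  have h3 := abs_add_le (y - x) (x - c)
  rw [sub_add_sub_cancel] at h3
  have : u * |x| ≤ u * (C + B) := by gcongr
  linarith

/-! ### Exactness of the first subtraction of Fast2Sum -/

/-- If a float `v` is at most the largest float of unit `2^e` and `s` is a multiple of `2^e`, then
`v` and `s` have a common unit in which `v` has an admissible significand. -/
theorem common_unit {p : ℕ} {v s : ℝ} (hv : v ∈ Fp p) {K e : ℤ}
    (hve : |v| ≤ (2 ^ p - 1) * 2 ^ e) (hs : s = K * 2 ^ e) :
    ∃ M N f : ℤ, |M| ≤ 2 ^ p - 1 ∧ v = M * 2 ^ f ∧ s = N * 2 ^ f := by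
  obtain ⟨M, f, hM, rfl⟩ := hv
  rcases le_or_gt f e with h | h
  · obtain ⟨j, rfl⟩ := Int.le.dest h
    refine ⟨M, K * 2 ^ j, f, hM, rfl, ?_⟩
    rw [hs, zpow_add₀ (by norm_num)]
    push_cast
    rw [zpow_natCast]
    ring
  · obtain ⟨j, rfl⟩ := Int.le.dest h.le
    have hrw : (M : ℝ) * 2 ^ (e + (j : ℤ)) = ((M * 2 ^ j : ℤ) : ℝ) * 2 ^ e := by
      rw [zpow_add₀ (by norm_num)]
      push_cast
      rw [zpow_natCast]
      ring
    refine ⟨M * 2 ^ j, K, e, ?_, hrw, hs⟩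
    rw [hrw, abs_mul, abs_of_pos (by positivity : (0 : ℝ) < 2 ^ e)] at hve
    have := le_of_mul_le_mul_right hve (by positivity)
    exact_mod_cast this

theorem fast2Sum_exact {p : ℕ} (hp : 2 ≤ p) {s w z : ℝ} (hs : s ∈ Fp p)
    (hz : Faithful p (s + w) z) {M N e : ℤ} (hM : |M| ≤ 2 ^ p - 1)
    (hw : w = M * 2 ^ e) (hsN : s = N * 2 ^ e) : z - s ∈ Fp p := by
  have hp1 : 1 ≤ p := by lia
  have hsum : s + w = ((N + M : ℤ) : ℝ) * 2 ^ e := by rw [hw, hsN]; push_cast; ring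
  rcases le_or_gt |N + M| (2 ^ p) with hsmall | hbig
  · rw [hz.eq_of_mem hp1 (hsum ▸ Fp_of_abs_le hp1 hsmall), add_sub_cancel_left]
    exact ⟨M, e, hM, hw⟩
  have hpe : (0 : ℝ) < 2 ^ e := by positivity
  have habs : |s + w| = (|N + M| : ℤ) * 2 ^ e := by
    rw [hsum, abs_mul, abs_of_pos hpe, Int.cast_abs]
  have hbigr : (2 : ℝ) ^ p < (|N + M| : ℤ) := by exact_mod_cast hbig
  have hne : s + w ≠ 0 := by
    rw [← abs_pos, habs]
    have : (0 : ℝ) < 2 ^ p := by positivity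
    exact mul_pos (by linarith) hpe
  obtain ⟨q, h1, h2⟩ := exists_binade hp1 hne
  -- The sum has unit `2^q` with `q > e`.
  have hqe : e < q := by
    have h3 : (2 : ℝ) ^ p * 2 ^ e < 2 ^ p * 2 ^ q := by
      refine lt_trans ?_ h2
      rw [habs]
      gcongr
    have h4 := lt_of_mul_lt_mul_left h3 (by positivity)
    exact (zpow_lt_zpow_iff_right₀ (by norm_num)).mp h4
  obtain ⟨j, hj⟩ := Int.le.dest (show e + 1 ≤ q by lia)
  obtain ⟨⟨n, hn⟩, herr⟩ := hz.binade hp1 h1 h2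
  have hq : (2 : ℝ) ^ q = 2 * (2 ^ j * 2 ^ e) := by
    rw [← hj, zpow_add₀ (by norm_num), zpow_add₀ (by norm_num), zpow_natCast]
    ring
  have hej : (2 : ℝ) ^ (e + j) = 2 ^ j * 2 ^ e := by
    rw [zpow_add₀ (by norm_num), zpow_natCast]
    ring
  have hMr : |(M : ℝ)| ≤ 2 ^ p - 1 := by exact_mod_cast hM
  have hwabs : |w| ≤ (2 ^ p - 1) * 2 ^ e := by
    rw [hw, abs_mul, abs_of_pos hpe]
    gcongr
  -- `s` is a multiple of half the unit of the sum.
  have hsm : ∃ n' : ℤ, s = n' * 2 ^ (e + j) := by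
    rcases Nat.eq_zero_or_pos j with rfl | hj0
    · exact ⟨N, by simpa using hsN⟩
    · refine Fp_multiple hp1 hs ?_
      have h5 : |s + w| ≤ |s| + |w| := abs_add_le s w
      obtain ⟨r, rfl⟩ := Nat.exists_eq_add_of_le hp1
      obtain ⟨i, rfl⟩ := Nat.exists_eq_add_of_le (Nat.succ_le_of_lt hj0)
      rw [hq] at h1
      rw [hej]
      simp only [Nat.add_sub_cancel_left, Nat.succ_eq_add_one, zero_add, pow_add, pow_one] at *
      have hi : (1 : ℝ) ≤ 2 ^ i := one_le_pow₀ (by norm_num)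
      have : (2 : ℝ) ^ r * 2 ^ e ≤ 2 ^ r * (2 ^ i * 2 ^ e) := by
        gcongr
        nlinarith
      nlinarith
  obtain ⟨n', hn'⟩ := hsm
  have hdiff : z - s = ((2 * n - n' : ℤ) : ℝ) * 2 ^ (e + j) := by
    rw [hn, hq, ← hej]
    nth_rewrite 1 [hn']
    push_cast
    ring
  rw [hdiff]
  refine Fp_of_abs_le hp1 ?_
  by_contra! hJ
  have hJr : (2 : ℝ) ^ p + 1 ≤ |((2 * n - n' : ℤ) : ℝ)| := by
    have : (2 : ℤ) ^ p + 1 ≤ |2 * n - n'| := by lia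
    exact_mod_cast this
  have hzs : |z - s| < 2 ^ q + (2 ^ p - 1) * 2 ^ e := by
    have := abs_add_le (z - (s + w)) w
    have h6 : z - (s + w) + w = z - s := by ring
    rw [h6] at this
    linarith
  rw [hdiff, abs_mul, hej, hq, abs_of_pos (by positivity : (0 : ℝ) < 2 ^ j * 2 ^ e)] at hzs
  have hj1 : (1 : ℝ) ≤ 2 ^ j := one_le_pow₀ (by norm_num)
  have hp' : (1 : ℝ) ≤ 2 ^ p := one_le_pow₀ (by norm_num)
  have h7 : ((2 : ℝ) ^ p + 1) * (2 ^ j * 2 ^ e) ≤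
      |((2 * n - n' : ℤ) : ℝ)| * (2 ^ j * 2 ^ e) := by gcongr
  have h8 : ((2 : ℝ) ^ p - 1) * (1 * 2 ^ e) ≤ (2 ^ p - 1) * (2 ^ j * 2 ^ e) := by
    gcongr
  nlinarith

/-! ### The two regimes of the leading addition -/

/-- Under cancellation, `x + y` is representable and `x + y` is a multiple of the unit of the
smaller operand. -/
theorem cancellation {p : ℕ} {x y : ℝ} (hx : x ∈ Fp p) (hy : y ∈ Fp p) (hyx : |y| ≤ |x|)
    (hc : |x + y| < |x| / 2) :
    x + y ∈ Fp p ∧ ∃ K e : ℤ, x + y = K * 2 ^ e ∧ |x| / 2 ≤ (2 ^ p - 1) * 2 ^ e := by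
  have hhalf : |x| / 2 ≤ |y| := by
    have := abs_add_le (x + y) (-y)
    rw [add_neg_cancel_right, abs_neg] at this
    linarith
  have hxr := hx
  obtain ⟨X, f, hX, hXe⟩ := hxr
  have hpf : (0 : ℝ) < 2 ^ f := by positivity
  have hXr : |(X : ℝ)| ≤ 2 ^ p - 1 := by exact_mod_cast hX
  have hyf : |y| ≤ (2 ^ p - 1) * 2 ^ f := by
    refine hyx.trans ?_
    rw [hXe, abs_mul, abs_of_pos hpf]
    gcongr
  obtain ⟨M, N, e, hM, hyM, hxN⟩ := common_unit hy hyf hXe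
  have hpe : (0 : ℝ) < 2 ^ e := by positivity
  have hMr : |(M : ℝ)| ≤ 2 ^ p - 1 := by exact_mod_cast hM
  have hsum : x + y = ((N + M : ℤ) : ℝ) * 2 ^ e := by rw [hyM, hxN]; push_cast; ring
  have hye : |y| ≤ (2 ^ p - 1) * 2 ^ e := by
    rw [hyM, abs_mul, abs_of_pos hpe]
    gcongr
  refine ⟨⟨N + M, e, ?_, hsum⟩, N + M, e, hsum, hhalf.trans hye⟩
  have h1 : |x + y| ≤ (2 ^ p - 1) * 2 ^ e := by linarith
  rw [hsum, abs_mul, abs_of_pos hpe] at h1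
  have := le_of_mul_le_mul_right h1 hpe
  exact_mod_cast this

/-- Crude bound on the low-order part when no cancellation is assumed; the constants only need
`u ≤ 1 / 32`. -/
theorem w_bound {p : ℕ} (hp : 6 ≤ p) {u m : ℝ} (hu : u = (2 : ℝ) ^ (1 - (p : ℤ)))
    (hu32 : u ≤ 1 / 32) {xh yh sh a' b' da db sl v w : ℝ}
    (hx : |xh| ≤ m) (hy : |yh| ≤ m) (hv : |v| ≤ (1 + u) * (m / 4))
    (h1 : Faithful p (xh + yh) sh) (h2 : Faithful p (sh - yh) a')
    (h3 : Faithful p (sh - a') b') (h4 : Faithful p (xh - a') da)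
    (h5 : Faithful p (yh - b') db) (h6 : Faithful p (da + db) sl)
    (h8 : Faithful p (sl + v) w) : |w| ≤ m / 2 := by
  have hp1 : 1 ≤ p := by lia
  have hu0 : 0 ≤ u := by rw [hu]; positivity
  have hm : 0 ≤ m := (abs_nonneg _).trans hx
  have hum : u * m ≤ m / 32 := by nlinarith
  have hum0 : 0 ≤ u * m := by positivity
  have e1 : |sh - yh - xh| ≤ m / 16 := by
    have := h1.rel_error hp1 hu
    have h' := abs_add_le xh yh
    have : u * |xh + yh| ≤ u * (2 * m) := by gcongr; linarith
    have : sh - yh - xh = sh - (xh + yh) := by ring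
    rw [this]
    linarith
  have ea := h2.near hp1 hu e1 hx
  have ea2 := h2.rel_error hp1 hu
  have e2 : |sh - yh| ≤ 17 / 16 * m := by
    have := abs_add_le (sh - yh - xh) xh
    rw [sub_add_cancel] at this
    linarith
  have eb0 : |sh - a' - yh| ≤ 17 / 512 * m := by
    have : sh - a' - yh = -(a' - (sh - yh)) := by ring
    rw [this, abs_neg]
    nlinarith [abs_nonneg (sh - yh)]
  have eb := h3.near hp1 hu eb0 hy
  have ea' : |xh - a'| ≤ 49 / 512 * m := by
    rw [abs_sub_comm]; nlinarith
  have eb' : |yh - b'| ≤ 34 / 512 * m := by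
    rw [abs_sub_comm]; nlinarith
  have growth : ∀ {t y B : ℝ}, Faithful p t y → |t| ≤ B → |y| ≤ 33 / 32 * B := by
    intro t y B h hB
    have := h.near hp1 hu (c := 0) (B := B) (C := 0) (by simpa using hB) (by simp)
    rw [sub_zero, zero_add] at this
    have hB0 : 0 ≤ B := (abs_nonneg _).trans hB
    nlinarith
  have eda := growth h4 ea'
  have edb := growth h5 eb'
  have esl := growth h6 ((abs_add_le da db).trans (add_le_add eda edb))
  have ew := growth h8 ((abs_add_le sl v).trans (add_le_add esl hv))
  nlinarith

theorem sloppy_normalization_valid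
    (p : ℕ) (hp : 6 ≤ p) (u : ℝ) (hu : u = (2 : ℝ) ^ (1 - (p : ℤ)))
    (ox oy : ℝ) (hox1 : 1 ≤ ox) (hox2 : ox ≤ 1 / (8 * u) - 2)
    (hoy1 : 1 ≤ oy) (hoy2 : oy ≤ 1 / (8 * u) - 2)
    (xh xl yh yl : ℝ)
    (hxh : xh ∈ Fp p) (hxl : xl ∈ Fp p) (hyh : yh ∈ Fp p) (hyl : yl ∈ Fp p)
    (hovx : |xl| ≤ ox * u * |xh|) (hovy : |yl| ≤ oy * u * |yh|)
    (sh a' b' da db sl v w zh d zl : ℝ)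
    (hrun : SloppyFaithful p xh xl yh yl sh a' b' da db sl v w zh d zl) :
    |zh + zl - (sh + w)| ≤ u ^ 2 * |sh + w| := by
  obtain ⟨h1, h2, h3, h4, h5, h6, h7, h8, h9, h10, h11⟩ := hrun
  have hp1 : 1 ≤ p := by lia
  have hu0 : 0 < u := by rw [hu]; positivity
  have hu32 : u ≤ 1 / 32 := by
    rw [hu]
    calc (2 : ℝ) ^ (1 - (p : ℤ)) ≤ 2 ^ (-5 : ℤ) :=
          zpow_le_zpow_right₀ (by norm_num) (by lia)
      _ = 1 / 32 := by norm_num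
  -- It suffices that `z_h - s_h` is representable.
  suffices hd : zh - sh ∈ Fp p by
    rw [h10.eq_of_mem hp1 hd] at h11
    have e1 := h11.rel_error hp1 hu
    have e2 := h9.rel_error hp1 hu
    have r1 : zl - (w - (zh - sh)) = zh + zl - (sh + w) := by ring
    have r2 : w - (zh - sh) = -(zh - (sh + w)) := by ring
    rw [r1, r2, abs_neg] at e1
    calc _ ≤ u * |zh - (sh + w)| := e1
      _ ≤ u * (u * |sh + w|) := by gcongr
      _ = u ^ 2 * |sh + w| := by ring
  suffices hunit : ∃ M N e : ℤ, |M| ≤ 2 ^ p - 1 ∧ w = M * 2 ^ e ∧ sh = N * 2 ^ e by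
    obtain ⟨M, N, e, hM, hwM, hsN⟩ := hunit
    exact fast2Sum_exact (by lia) (h1.mem hp1) h9 hM hwM hsN
  have hw := h8.mem hp1
  have hoverlap : ∀ o : ℝ, o ≤ 1 / (8 * u) - 2 → o * u ≤ 1 / 8 := by
    intro o ho
    have : o * u ≤ (1 / (8 * u) - 2) * u := by gcongr
    have h' : (1 / (8 * u) - 2) * u = 1 / 8 - 2 * u := by field_simp
    linarith
  have hxl8 : |xl| ≤ |xh| / 8 := by
    nlinarith [hoverlap ox hox2, abs_nonneg xh]
  have hyl8 : |yl| ≤ |yh| / 8 := by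
    nlinarith [hoverlap oy hoy2, abs_nonneg yh]
  set m := max |xh| |yh| with hmdef
  have hxm : |xh| ≤ m := le_max_left _ _
  have hym : |yh| ≤ m := le_max_right _ _
  have hm0 : 0 ≤ m := (abs_nonneg _).trans hxm
  have hv : |v| ≤ (1 + u) * (m / 4) := by
    have h' : |xl + yl - 0| ≤ m / 4 := by
      rw [sub_zero]
      linarith [abs_add_le xl yl]
    have := h7.near hp1 hu h' (C := 0) (by simp)
    rw [sub_zero] at this
    linarith
  by_cases hc : |xh + yh| < m / 2
  · have hcanc : xh + yh ∈ Fp p ∧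
        ∃ K e : ℤ, xh + yh = K * 2 ^ e ∧ m / 2 ≤ (2 ^ p - 1) * 2 ^ e := by
      rcases le_total |yh| |xh| with h | h
      · rw [hmdef, max_eq_left h] at hc ⊢
        exact cancellation hxh hyh h hc
      · rw [hmdef, max_eq_right h, add_comm] at *
        exact cancellation hyh hxh h hc
    obtain ⟨hmem, K, e, hK, hme⟩ := hcanc
    -- The leading addition is exact, hence so is the whole of `2Sum`, with zero error term.
    have hsh := h1.eq_of_mem hp1 hmem
    have ha : a' = xh := by
      have : sh - yh = xh := by rw [hsh]; ring
      rw [this] at h2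
      exact h2.eq_of_mem hp1 hxh
    have hb : b' = yh := by
      have : sh - a' = yh := by rw [hsh, ha]; ring
      rw [this] at h3
      exact h3.eq_of_mem hp1 hyh
    rw [ha, sub_self] at h4
    rw [hb, sub_self] at h5
    rw [h4.eq_of_mem hp1 (Fp_zero p), h5.eq_of_mem hp1 (Fp_zero p), add_zero] at h6
    rw [h6.eq_of_mem hp1 (Fp_zero p), zero_add] at h8
    have hwv := h8.eq_of_mem hp1 (h7.mem hp1)
    refine common_unit hw (K := K) (e := e) ?_ (hsh.trans hK)
    rw [hwv]
    nlinarith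
  · have hwm := w_bound hp hu hu32 hxm hym hv h1 h2 h3 h4 h5 h6 h8
    have hmF : m / 2 ∈ Fp p := by
      refine Fp_half ?_
      rcases max_choice |xh| |yh| with h | h <;> rw [hmdef, h]
      · exact Fp_abs hxh
      · exact Fp_abs hyh
    have hshm : m / 2 ≤ |sh| := by
      rcases le_abs.mp (not_lt.mp hc) with h | h
      · exact (h1.le_of_le hp1 hmF h).trans (le_abs_self _)
      · have := h1.ge_of_ge hp1 (Fp_neg hmF) (by linarith)
        linarith [neg_le_abs sh]
    obtain ⟨S, e, hS, hSe⟩ := h1.mem hp1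
    have hSr : |(S : ℝ)| ≤ 2 ^ p - 1 := by exact_mod_cast hS
    refine common_unit hw (K := S) (e := e) ?_ hSe
    refine (hwm.trans hshm).trans ?_
    rw [hSe, abs_mul, abs_of_pos (by positivity : (0 : ℝ) < 2 ^ e)]
    gcongr
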